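/- In the Cholesky setting, set I₁ = θ³ − θθ₂θ₁ − θ₁θ₂θ and I₂ = −θ³ + θθ₁θ₂ + θ₂θ₁θ, where θ = θ₁ + θ₂. Then ∂I₁ − I₁θ₁ − θ₁I₁ = −θ⁴ and ∂I₂ + I₂θ₂ + θ₂I₂ = −θ⁴. -/

import Mathlib

/-- An abstract model of the Dolbeault double complex of `(p,q)`-forms on a complex
manifold: a bigraded associative `ℂ`-algebra `Ω = ⨁ Ω^{p,q}`, graded-commutative with
respect to total degree, with `ℂ`-linear operators `∂` (`pd`) and `∂̄` (`pdb`) of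
bidegrees `(1,0)` and `(0,1)`, squaring to zero and anticommuting, satisfying the
graded Leibniz rule. -/
structure DolbeaultAlgebra (Ω : Type*) [Ring Ω] [Algebra ℂ Ω] where
  /-- the `ℂ`-subspace of elements of bidegree `(p,q)` -/
  deg : ℕ → ℕ → Submodule ℂ Ω
  one_mem : (1 : Ω) ∈ deg 0 0
  mul_mem : ∀ {p q p' q'} {a b : Ω}, a ∈ deg p q → b ∈ deg p' q' →
    a * b ∈ deg (p + p') (q + q')
  gcomm : ∀ {p q p' q'} (a b : Ω), a ∈ deg p q → b ∈ deg p' q' →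
    a * b = ((-1 : ℂ) ^ ((p + q) * (p' + q'))) • (b * a)
  /-- the operator `∂` -/
  pd : Ω →ₗ[ℂ] Ω
  /-- the operator `∂̄` -/
  pdb : Ω →ₗ[ℂ] Ω
  pd_mem : ∀ {p q} {a : Ω}, a ∈ deg p q → pd a ∈ deg (p + 1) q
  pdb_mem : ∀ {p q} {a : Ω}, a ∈ deg p q → pdb a ∈ deg p (q + 1)
  pd_pd : ∀ a : Ω, pd (pd a) = 0
  pdb_pdb : ∀ a : Ω, pdb (pdb a) = 0
  pd_pdb : ∀ a : Ω, pd (pdb a) + pdb (pd a) = 0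
  pd_leibniz : ∀ {p q} (a b : Ω), a ∈ deg p q →
    pd (a * b) = pd a * b + ((-1 : ℂ) ^ (p + q)) • (a * pd b)
  pdb_leibniz : ∀ {p q} (a b : Ω), a ∈ deg p q →
    pdb (a * b) = pdb a * b + ((-1 : ℂ) ^ (p + q)) • (a * pdb b)

namespace DolbeaultAlgebra

variable {Ω : Type*} [Ring Ω] [Algebra ℂ Ω] {r : ℕ}

/-- the entrywise extension of `∂` to `r × r` matrices over `Ω` -/
def mpd (A : DolbeaultAlgebra Ω) (M : Matrix (Fin r) (Fin r) Ω) :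
    Matrix (Fin r) (Fin r) Ω := M.map A.pd

/-- the entrywise extension of `∂̄` to `r × r` matrices over `Ω` -/
def mpdb (A : DolbeaultAlgebra Ω) (M : Matrix (Fin r) (Fin r) Ω) :
    Matrix (Fin r) (Fin r) Ω := M.map A.pdb

/-- the assertion that all entries of a matrix lie in `Ω^{p,q}` -/
def MatDeg (A : DolbeaultAlgebra Ω) (p q : ℕ) (M : Matrix (Fin r) (Fin r) Ω) : Prop :=
  ∀ i j, M i j ∈ A.deg p q

end DolbeaultAlgebra

variable {Ω : Type*} [Ring Ω] [Algebra ℂ Ω]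

namespace DolbeaultAlgebra

theorem mpd_add' {r : ℕ} (A : DolbeaultAlgebra Ω) (M N : Matrix (Fin r) (Fin r) Ω) :
    A.mpd (M + N) = A.mpd M + A.mpd N := by
  ext i j; simp [mpd]

theorem mpd_sub' {r : ℕ} (A : DolbeaultAlgebra Ω) (M N : Matrix (Fin r) (Fin r) Ω) :
    A.mpd (M - N) = A.mpd M - A.mpd N := by
  ext i j; simp [mpd]

theorem mpd_neg' {r : ℕ} (A : DolbeaultAlgebra Ω) (M : Matrix (Fin r) (Fin r) Ω) :
    A.mpd (-M) = -A.mpd M := by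
  ext i j; simp [mpd]

theorem mpd_mpd' {r : ℕ} (A : DolbeaultAlgebra Ω) (M : Matrix (Fin r) (Fin r) Ω) :
    A.mpd (A.mpd M) = 0 := by
  ext i j; simp [mpd, A.pd_pd]

theorem mpd_mul_even {r : ℕ} (A : DolbeaultAlgebra Ω) (M N : Matrix (Fin r) (Fin r) Ω)
    (hM : A.MatDeg 0 0 M) : A.mpd (M * N) = A.mpd M * N + M * A.mpd N := by
  ext i j
  simp only [mpd, Matrix.map_apply, Matrix.mul_apply, Matrix.add_apply, map_sum,
    ← Finset.sum_add_distrib]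
  refine Finset.sum_congr rfl fun k _ => ?_
  rw [A.pd_leibniz _ _ (hM i k)]; simp

theorem mpd_mul_odd {r : ℕ} (A : DolbeaultAlgebra Ω) (M N : Matrix (Fin r) (Fin r) Ω)
    (hM : A.MatDeg 1 0 M) : A.mpd (M * N) = A.mpd M * N - M * A.mpd N := by
  ext i j
  simp only [mpd, Matrix.map_apply, Matrix.mul_apply, Matrix.sub_apply, map_sum,
    ← Finset.sum_sub_distrib]
  refine Finset.sum_congr rfl fun k _ => ?_
  rw [A.pd_leibniz _ _ (hM i k)]; simp [sub_eq_add_neg]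

theorem matDeg_mul' {r p q p' q' : ℕ} (A : DolbeaultAlgebra Ω)
    {M N : Matrix (Fin r) (Fin r) Ω}
    (hM : A.MatDeg p q M) (hN : A.MatDeg p' q' N) : A.MatDeg (p + p') (q + q') (M * N) := by
  intro i j
  rw [Matrix.mul_apply]
  exact Submodule.sum_mem _ fun k _ => A.mul_mem (hM i k) (hN k j)

theorem mpd_one' {r : ℕ} (A : DolbeaultAlgebra Ω) :
    A.mpd (1 : Matrix (Fin r) (Fin r) Ω) = 0 := by
  have h1 : A.pd (1 : Ω) = 0 := by
    have := A.pd_leibniz 1 1 A.one_mem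
    simpa using this
  ext i j
  by_cases hij : i = j <;> simp [mpd, Matrix.one_apply, hij, h1]

theorem mpd_matDeg' {r p q : ℕ} (A : DolbeaultAlgebra Ω) {M : Matrix (Fin r) (Fin r) Ω}
    (hM : A.MatDeg p q M) : A.MatDeg (p + 1) q (A.mpd M) := fun i j => A.pd_mem (hM i j)

end DolbeaultAlgebra

/-- In the Cholesky setting, with `I₁ = θ³ - θθ₂θ₁ - θ₁θ₂θ` and
`I₂ = -θ³ + θθ₁θ₂ + θ₂θ₁θ`: `∂I₁ - I₁θ₁ - θ₁I₁ = -θ⁴` and `∂I₂ + I₂θ₂ + θ₂I₂ = -θ⁴`. -/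
theorem stmt18
    (A : DolbeaultAlgebra Ω) (r : ℕ) (hr : 1 ≤ r)
    (b c binv cinv : Matrix (Fin r) (Fin r) Ω)
    (hbdeg : A.MatDeg 0 0 b) (hcdeg : A.MatDeg 0 0 c)
    (hbinvdeg : A.MatDeg 0 0 binv) (hcinvdeg : A.MatDeg 0 0 cinv)
    (hbu : ∀ i j : Fin r, j < i → b i j = 0) (hbd : ∀ i : Fin r, b i i = 1)
    (hcl : ∀ i j : Fin r, i < j → c i j = 0)
    (hbinvl : binv * b = 1) (hbinvr : b * binv = 1)
    (hcinvl : cinv * c = 1) (hcinvr : c * cinv = 1)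
    (h hinv : Matrix (Fin r) (Fin r) Ω) (hh : h = c * b) (hhinv : hinv = binv * cinv)
    (θ₁ θ₂ θ θb₁ θb₂ θb : Matrix (Fin r) (Fin r) Ω)
    (hθ₁ : θ₁ = A.mpd b * binv) (hθ₂ : θ₂ = cinv * A.mpd c) (hθ : θ = θ₁ + θ₂)
    (hθb₁ : θb₁ = A.mpdb b * binv) (hθb₂ : θb₂ = cinv * A.mpdb c) (hθb : θb = θb₁ + θb₂)
    (Bθ Bθb BΘ : Matrix (Fin r) (Fin r) Ω)
    (hBθ : Bθ = hinv * A.mpd h) (hBθb : Bθb = hinv * A.mpdb h) (hBΘ : BΘ = A.mpdb Bθ)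
    (I₁ I₂ : Matrix (Fin r) (Fin r) Ω)
    (hI₁ : I₁ = θ ^ 3 - θ * θ₂ * θ₁ - θ₁ * θ₂ * θ)
    (hI₂ : I₂ = -θ ^ 3 + θ * θ₁ * θ₂ + θ₂ * θ₁ * θ) :
    A.mpd I₁ - I₁ * θ₁ - θ₁ * I₁ = -θ ^ 4 ∧
    A.mpd I₂ + I₂ * θ₂ + θ₂ * I₂ = -θ ^ 4 := by
  have d₁ : A.MatDeg 1 0 θ₁ := by
    rw [hθ₁]; exact A.matDeg_mul' (A.mpd_matDeg' hbdeg) hbinvdeg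
  have d₂ : A.MatDeg 1 0 θ₂ := by
    rw [hθ₂]; exact A.matDeg_mul' hcinvdeg (A.mpd_matDeg' hcdeg)
  have e₁ : A.mpd θ₁ = θ₁ * θ₁ := by
    have h1 : A.mpd b * binv + b * A.mpd binv = 0 := by
      rw [← A.mpd_mul_even _ _ hbdeg, hbinvr, A.mpd_one']
    have h2 : A.mpd binv = -(binv * (A.mpd b * binv)) := by
      have h3 : binv * (b * A.mpd binv) = -(binv * (A.mpd b * binv)) := by
        rw [eq_neg_of_add_eq_zero_right h1, mul_neg]
      rwa [← mul_assoc, hbinvl, one_mul] at h3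
    rw [hθ₁, A.mpd_mul_odd _ _ (A.mpd_matDeg' hbdeg), A.mpd_mpd', h2]
    noncomm_ring
  have e₂ : A.mpd θ₂ = -(θ₂ * θ₂) := by
    have h1 : A.mpd cinv * c + cinv * A.mpd c = 0 := by
      rw [← A.mpd_mul_even _ _ hcinvdeg, hcinvl, A.mpd_one']
    have h2 : A.mpd cinv = -(cinv * A.mpd c * cinv) := by
      have h3 : A.mpd cinv * c * cinv = -(cinv * A.mpd c * cinv) := by
        rw [eq_neg_of_add_eq_zero_left h1, neg_mul]
      rwa [mul_assoc, hcinvr, mul_one] at h3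
    rw [hθ₂, A.mpd_mul_even _ _ hcinvdeg, A.mpd_mpd', h2]
    noncomm_ring
  have L₁ := fun N => A.mpd_mul_odd θ₁ N d₁
  have L₂ := fun N => A.mpd_mul_odd θ₂ N d₂
  clear hθ₁ hθ₂
  subst hI₁ hI₂ hθ
  constructor
  · simp only [pow_succ, pow_zero, one_mul, mul_add, add_mul, mul_assoc, A.mpd_add', A.mpd_sub',
      A.mpd_neg', L₁, L₂, e₁, e₂, mul_sub, sub_mul, mul_neg, neg_mul]
    abel
  · simp only [pow_succ, pow_zero, one_mul, mul_add, add_mul, mul_assoc, A.mpd_add', A.mpd_sub',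
      A.mpd_neg', L₁, L₂, e₁, e₂, mul_sub, sub_mul, mul_neg, neg_mul]
    abel
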